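/- Let X be a random variable in a sub-linear expectation space with C_𝕍(|X|) < ∞. Then (a) Σ_{j=1}^∞ 𝔼[(|X| ∧ j)²]/j² < ∞; and (b) if furthermore lim_{c→∞} 𝔼[|X| ∧ c] = 𝔼[|X|], then 𝔼[|X|] ≤ C_𝕍(|X|). -/

import Mathlib

open Filter MeasureTheory
open scoped ENNReal NNReal

noncomputable section

/-- A sub-linear expectation on `Ω`: a monotone, constant-preserving, sub-additive,
positively homogeneous functional on real random variables (with values in the
extended reals, so that random variables without a finite expectation are allowed). -/
structure SublinearExp (Ω : Type) where
  E : (Ω → ℝ) → EReal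
  mono : ∀ X Y : Ω → ℝ, (∀ ω, X ω ≤ Y ω) → E X ≤ E Y
  const_eq : ∀ c : ℝ, E (fun _ => c) = (c : EReal)
  subadd : ∀ X Y : Ω → ℝ, E (fun ω => X ω + Y ω) ≤ E X + E Y
  pos_homog : ∀ lam : ℝ, 0 ≤ lam → ∀ X : Ω → ℝ,
    E (fun ω => lam * X ω) = (lam : EReal) * E X

namespace SublinearExp

variable {Ω : Type}

/-- The conjugate expectation `ℰ[X] := −𝔼[−X]`. -/
def cE (SL : SublinearExp Ω) (X : Ω → ℝ) : EReal := - SL.E fun ω => - X ω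

/-- The upper capacity `𝕍(A) := inf{𝔼[ξ] : 1_A ≤ ξ}`. -/
def V (SL : SublinearExp Ω) (A : Set Ω) : ℝ :=
  sInf {x : ℝ | ∃ ξ : Ω → ℝ,
    (∀ ω, A.indicator (fun _ => (1 : ℝ)) ω ≤ ξ ω) ∧ SL.E ξ = (x : EReal)}

/-- The lower capacity `𝓋(A) := 1 − 𝕍(Aᶜ)`. -/
def vLow (SL : SublinearExp Ω) (A : Set Ω) : ℝ := 1 - SL.V Aᶜ

/-- The Choquet integral `C_𝕍(X) := ∫₀^∞ 𝕍(X ≥ t) dt` (of a non-negative r.v.). -/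
def Choquet (SL : SublinearExp Ω) (X : Ω → ℝ) : ℝ≥0∞ :=
  ∫⁻ t in Set.Ioi (0 : ℝ), ENNReal.ofReal (SL.V {ω | t ≤ X ω})

/-- The outer capacity `𝕍*(A) := inf{Σ_n 𝕍(A_n) : A ⊆ ∪_n A_n}`. -/
def Vout (SL : SublinearExp Ω) (A : Set Ω) : ℝ≥0∞ :=
  ⨅ (B : ℕ → Set Ω) (_ : A ⊆ ⋃ n, B n), ∑' n, ENNReal.ofReal (SL.V (B n))

/-- The upper capacity is continuous: continuous from below and from above. -/
def ContinuousCapacity (SL : SublinearExp Ω) : Prop :=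
  (∀ A : ℕ → Set Ω, Monotone A →
    Tendsto (fun n => SL.V (A n)) atTop (nhds (SL.V (⋃ n, A n)))) ∧
  (∀ A : ℕ → Set Ω, Antitone A →
    Tendsto (fun n => SL.V (A n)) atTop (nhds (SL.V (⋂ n, A n))))

/-- Bounded Lipschitz function on ℝ. -/
def IsBLip (g : ℝ → ℝ) : Prop :=
  (∃ L : NNReal, LipschitzWith L g) ∧ ∃ M : ℝ, ∀ x, |g x| ≤ M

/-- Local Lipschitz function on ℝ: `|φ(x) − φ(y)| ≤ C(1+|x|^m+|y|^m)|x−y|`. -/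
def IsLocLip (φ : ℝ → ℝ) : Prop :=
  ∃ (C : ℝ) (m : ℕ), ∀ x y : ℝ, |φ x - φ y| ≤ C * (1 + |x| ^ m + |y| ^ m) * |x - y|

/-- Upper extended negative dependence (finite family) with dominating constant `K`:
`𝔼[∏ g_i(X_i)] ≤ K ∏ 𝔼[g_i(X_i)]` for all non-negative bounded Lipschitz
non-decreasing `g_i`.  (Expectations of bounded functions are finite, whence
the `toReal`.) -/
def UENDFin (SL : SublinearExp Ω) (K : ℝ) {n : ℕ} (X : Fin n → Ω → ℝ) : Prop :=
  ∀ g : Fin n → ℝ → ℝ, (∀ i, IsBLip (g i)) → (∀ i, Monotone (g i)) →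
    (∀ i x, 0 ≤ g i x) →
    SL.E (fun ω => ∏ i, g i (X i ω)) ≤
      ((K * ∏ i, (SL.E fun ω => g i (X i ω)).toReal : ℝ) : EReal)

/-- Upper extended negative dependence for a sequence. -/
def UEND (SL : SublinearExp Ω) (K : ℝ) (X : ℕ → Ω → ℝ) : Prop :=
  ∀ n : ℕ, ∀ g : ℕ → ℝ → ℝ, (∀ i, IsBLip (g i)) → (∀ i, Monotone (g i)) →
    (∀ i x, 0 ≤ g i x) →
    SL.E (fun ω => ∏ i ∈ Finset.range n, g i (X i ω)) ≤
      ((K * ∏ i ∈ Finset.range n, (SL.E fun ω => g i (X i ω)).toReal : ℝ) : EReal)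

/-- Lower extended negative dependence for a sequence. -/
def LEND (SL : SublinearExp Ω) (K : ℝ) (X : ℕ → Ω → ℝ) : Prop :=
  ∀ n : ℕ, ∀ g : ℕ → ℝ → ℝ, (∀ i, IsBLip (g i)) → (∀ i, Antitone (g i)) →
    (∀ i x, 0 ≤ g i x) →
    SL.E (fun ω => ∏ i ∈ Finset.range n, g i (X i ω)) ≤
      ((K * ∏ i ∈ Finset.range n, (SL.E fun ω => g i (X i ω)).toReal : ℝ) : EReal)

/-- Extended negative dependence = upper and lower END. -/
def END (SL : SublinearExp Ω) (K : ℝ) (X : ℕ → Ω → ℝ) : Prop :=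
  UEND SL K X ∧ LEND SL K X

/-- Upper extended negative dependence under the conjugate expectation `ℰ`
(finite family). -/
def UENDFinConj (SL : SublinearExp Ω) (K : ℝ) {n : ℕ} (X : Fin n → Ω → ℝ) : Prop :=
  ∀ g : Fin n → ℝ → ℝ, (∀ i, IsBLip (g i)) → (∀ i, Monotone (g i)) →
    (∀ i x, 0 ≤ g i x) →
    SL.cE (fun ω => ∏ i, g i (X i ω)) ≤
      ((K * ∏ i, (SL.cE fun ω => g i (X i ω)).toReal : ℝ) : EReal)

/-- Upper extended negative dependence under the conjugate expectation (sequence). -/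
def UENDconj (SL : SublinearExp Ω) (K : ℝ) (X : ℕ → Ω → ℝ) : Prop :=
  ∀ n : ℕ, ∀ g : ℕ → ℝ → ℝ, (∀ i, IsBLip (g i)) → (∀ i, Monotone (g i)) →
    (∀ i x, 0 ≤ g i x) →
    SL.cE (fun ω => ∏ i ∈ Finset.range n, g i (X i ω)) ≤
      ((K * ∏ i ∈ Finset.range n, (SL.cE fun ω => g i (X i ω)).toReal : ℝ) : EReal)

/-- Lower extended negative dependence under the conjugate expectation (sequence). -/
def LENDconj (SL : SublinearExp Ω) (K : ℝ) (X : ℕ → Ω → ℝ) : Prop :=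
  ∀ n : ℕ, ∀ g : ℕ → ℝ → ℝ, (∀ i, IsBLip (g i)) → (∀ i, Antitone (g i)) →
    (∀ i x, 0 ≤ g i x) →
    SL.cE (fun ω => ∏ i ∈ Finset.range n, g i (X i ω)) ≤
      ((K * ∏ i ∈ Finset.range n, (SL.cE fun ω => g i (X i ω)).toReal : ℝ) : EReal)

/-- Extended negative dependence under the conjugate expectation. -/
def ENDconj (SL : SublinearExp Ω) (K : ℝ) (X : ℕ → Ω → ℝ) : Prop :=
  UENDconj SL K X ∧ LENDconj SL K X

/-- Extended independence of a sequence: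
`𝔼[∏ ψ_i(X_i)] = ∏ 𝔼[ψ_i(X_i)]` for non-negative local Lipschitz `ψ_i`,
whenever the expectations involved are finite. -/
def ExtIndep (SL : SublinearExp Ω) (X : ℕ → Ω → ℝ) : Prop :=
  ∀ n : ℕ, ∀ ψ : ℕ → ℝ → ℝ, (∀ i, IsLocLip (ψ i)) → (∀ i x, 0 ≤ ψ i x) →
    (∀ i ∈ Finset.range n, SL.E (fun ω => ψ i (X i ω)) ≠ ⊤) →
    SL.E (fun ω => ∏ i ∈ Finset.range n, ψ i (X i ω)) =
      ((∏ i ∈ Finset.range n, (SL.E fun ω => ψ i (X i ω)).toReal : ℝ) : EReal)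

/-- Extended independence of two random variables. -/
def ExtIndepPair (SL : SublinearExp Ω) (Y Z : Ω → ℝ) : Prop :=
  ∀ ψ₁ ψ₂ : ℝ → ℝ, IsLocLip ψ₁ → IsLocLip ψ₂ →
    (∀ x, 0 ≤ ψ₁ x) → (∀ x, 0 ≤ ψ₂ x) →
    SL.E (fun ω => ψ₁ (Y ω)) ≠ ⊤ → SL.E (fun ω => ψ₂ (Z ω)) ≠ ⊤ →
    SL.E (fun ω => ψ₁ (Y ω) * ψ₂ (Z ω)) =
      (((SL.E fun ω => ψ₁ (Y ω)).toReal * (SL.E fun ω => ψ₂ (Z ω)).toReal : ℝ) : EReal)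

/-- Identically distributed: `𝔼[φ(X_i)] = 𝔼[φ(X_1)]` for all local Lipschitz `φ`. -/
def IdentDist (SL : SublinearExp Ω) (X : ℕ → Ω → ℝ) : Prop :=
  ∀ (i : ℕ) (φ : ℝ → ℝ), IsLocLip φ →
    SL.E (fun ω => φ (X i ω)) = SL.E fun ω => φ (X 0 ω)

end SublinearExp

/-- `log x = ln(x ∨ e)`. -/
def paperLog (x : ℝ) : ℝ := Real.log (max x (Real.exp 1))

/-- `a_n = √(2 n log log n)` with the above convention for `log`. -/
def lilA (n : ℕ) : ℝ := Real.sqrt (2 * n * paperLog (paperLog n))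

namespace SublinearExp

variable {Ω : Type} (SL : SublinearExp Ω)

lemma E_indicator_mem (A : Set Ω) :
    0 ≤ SL.E (A.indicator fun _ => 1) ∧ SL.E (A.indicator fun _ => 1) ≤ 1 := by
  constructor
  · have h := SL.mono (fun _ => 0) (A.indicator fun _ => 1)
      (fun ω => Set.indicator_nonneg (fun _ _ => zero_le_one) ω)
    rwa [SL.const_eq] at h
  · have h := SL.mono (A.indicator fun _ => 1) (fun _ => 1)
      (fun ω => Set.indicator_le_self' (fun _ _ => zero_le_one) ω)
    rwa [SL.const_eq] at h

/-- The infimum defining the upper capacity is attained at the indicator function. -/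
lemma E_indicator_eq_V (A : Set Ω) : SL.E (A.indicator fun _ => 1) = (SL.V A : EReal) := by
  obtain ⟨h0, h1⟩ := SL.E_indicator_mem A
  have hcoe : SL.E (A.indicator fun _ => 1)
      = ((SL.E (A.indicator fun _ => 1)).toReal : EReal) :=
    (EReal.coe_toReal (ne_top_of_le_ne_top (EReal.coe_ne_top 1) h1)
      (ne_bot_of_le_ne_bot EReal.zero_ne_bot h0)).symm
  have hleast : IsLeast {x : ℝ | ∃ ξ : Ω → ℝ,
      (∀ ω, A.indicator (fun _ => (1 : ℝ)) ω ≤ ξ ω) ∧ SL.E ξ = (x : EReal)}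
      (SL.E (A.indicator fun _ => 1)).toReal := by
    refine ⟨⟨_, fun _ => le_rfl, hcoe⟩, ?_⟩
    rintro x ⟨ξ, hξ, hx⟩
    have := SL.mono _ _ hξ
    rw [hx, hcoe] at this
    exact_mod_cast this
  rw [V, hleast.csInf_eq, ← hcoe]

lemma V_nonneg (A : Set Ω) : 0 ≤ SL.V A := by
  have h := (SL.E_indicator_mem A).1
  rw [E_indicator_eq_V] at h
  exact_mod_cast h

lemma V_le_one (A : Set Ω) : SL.V A ≤ 1 := by
  have h := (SL.E_indicator_mem A).2
  rw [E_indicator_eq_V] at h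
  exact_mod_cast h

lemma V_mono {A B : Set Ω} (h : A ⊆ B) : SL.V A ≤ SL.V B := by
  have := SL.mono _ _ (fun ω => Set.indicator_le_indicator_of_subset h
    (fun _ => zero_le_one (α := ℝ)) ω)
  rw [E_indicator_eq_V, E_indicator_eq_V] at this
  exact_mod_cast this

lemma antitone_V_superlevel (Y : Ω → ℝ) : Antitone fun t : ℝ => SL.V {ω | t ≤ Y ω} :=
  fun _ _ hst => SL.V_mono fun _ hω => hst.trans hω

lemma E_sum_indicator_le (n : ℕ) (a : ℕ → ℝ) (ha : ∀ i, 0 ≤ a i) (A : ℕ → Set Ω) :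
    SL.E (fun ω => ∑ i ∈ Finset.range n, a i * (A i).indicator (fun _ => 1) ω) ≤
      ((∑ i ∈ Finset.range n, a i * SL.V (A i) : ℝ) : EReal) := by
  induction n with
  | zero => simpa using (SL.const_eq 0).le
  | succ n ih =>
    simp only [Finset.sum_range_succ]
    refine (SL.subadd _ _).trans ?_
    rw [SL.pos_homog _ (ha n), E_indicator_eq_V, EReal.coe_add, EReal.coe_mul]
    gcongr

/-- Riemann lower sums of the Choquet integral. -/
lemma sum_V_le_Choquet (Y : Ω → ℝ) (hY : SL.Choquet Y ≠ ⊤) {ε : ℝ} (hε : 0 < ε) (n : ℕ) :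
    ∑ i ∈ Finset.range n, ε * SL.V {ω | ε * ((i + 1 : ℕ) : ℝ) ≤ Y ω} ≤
      (SL.Choquet Y).toReal := by
  have hanti := SL.antitone_V_superlevel Y
  have hscaled : AntitoneOn (fun x : ℝ => SL.V {ω | ε * x ≤ Y ω}) (Set.Icc 0 (0 + n)) :=
    fun _ _ _ _ hxy => hanti (by gcongr)
  have hsum := hscaled.sum_le_integral
  rw [← Finset.mul_sum]
  simp only [zero_add] at hsum
  calc _ ≤ ε * ∫ x in (0 : ℝ)..n, SL.V {ω | ε * x ≤ Y ω} := by gcongr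
    _ = ∫ t in (0 : ℝ)..(ε * n), SL.V {ω | t ≤ Y ω} := by
      rw [intervalIntegral.mul_integral_comp_mul_left (f := fun t => SL.V {ω | t ≤ Y ω}),
        mul_zero]
    _ ≤ _ := by
      rw [intervalIntegral.integral_of_le (by positivity),
        integral_eq_lintegral_of_nonneg_ae (ae_of_all _ fun _ => SL.V_nonneg _)
          hanti.measurable.aestronglyMeasurable]
      exact ENNReal.toReal_mono hY (lintegral_mono_set Set.Ioc_subset_Ioi_self)

lemma min_le_add_sum_indicator (Y : Ω → ℝ) (ε : ℝ) (ω : Ω) (n : ℕ) :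
    min (Y ω) (ε * (n + 1)) ≤ ε + ∑ i ∈ Finset.range n,
      ε * {ω | ε * ((i + 1 : ℕ) : ℝ) ≤ Y ω}.indicator (fun _ => (1 : ℝ)) ω := by
  induction n with
  | zero => simp
  | succ n ih =>
    rw [Finset.sum_range_succ]
    push_cast at ih ⊢
    by_cases h : ε * ((n : ℝ) + 1) ≤ Y ω
    · rw [min_eq_right h] at ih
      rw [Set.indicator_of_mem (by simpa using h)]
      have := min_le_right (Y ω) (ε * ((n : ℝ) + 1 + 1))
      linarith
    · rw [min_eq_left (not_le.1 h).le] at ih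
      rw [Set.indicator_of_notMem (by simpa using h)]
      have := min_le_left (Y ω) (ε * ((n : ℝ) + 1 + 1))
      linarith

lemma min_sq_le_sum_indicator (Y : Ω → ℝ) (ω : Ω) (hY : 0 ≤ Y ω) (n : ℕ) :
    min (Y ω) n ^ 2 ≤ ∑ i ∈ Finset.range n,
      (2 * (i : ℝ) + 1) * {ω | (i : ℝ) ≤ Y ω}.indicator (fun _ => (1 : ℝ)) ω := by
  induction n with
  | zero => simp [hY]
  | succ n ih =>
    rw [Finset.sum_range_succ]
    push_cast
    by_cases h : (n : ℝ) ≤ Y ω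
    · rw [min_eq_right h] at ih
      rw [Set.indicator_of_mem (by simpa using h)]
      have : min (Y ω) ((n : ℝ) + 1) ^ 2 ≤ ((n : ℝ) + 1) ^ 2 := by
        gcongr
        exact min_le_right _ _
      linarith
    · have h' := (not_le.1 h).le
      rw [min_eq_left h'] at ih
      rw [Set.indicator_of_notMem (by simpa using h), min_eq_left (by linarith)]
      linarith

lemma E_min_le_Choquet (Y : Ω → ℝ) (hY : SL.Choquet Y ≠ ⊤) (c : ℝ) :
    SL.E (fun ω => min (Y ω) c) ≤ ((SL.Choquet Y).toReal : EReal) := by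
  have key : ∀ ε : ℝ, 0 < ε →
      SL.E (fun ω => min (Y ω) c) ≤ ((ε + (SL.Choquet Y).toReal : ℝ) : EReal) := by
    intro ε hε
    obtain ⟨n, hn⟩ := exists_nat_ge (c / ε)
    have hc : c ≤ ε * (n + 1) := by
      rw [div_le_iff₀ hε] at hn
      nlinarith
    refine (SL.mono _ _ fun ω => (min_le_min_left _ hc).trans
      (min_le_add_sum_indicator Y ε ω n)).trans ((SL.subadd _ _).trans ?_)
    rw [SL.const_eq, EReal.coe_add]
    gcongr
    refine (SL.E_sum_indicator_le n (fun _ => ε) (fun _ => hε.le) _).trans ?_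
    exact EReal.coe_le_coe_iff.2 (SL.sum_V_le_Choquet Y hY hε n)
  by_contra! h
  obtain ⟨r, hr, hr'⟩ := EReal.lt_iff_exists_real_btwn.1 h
  have := key (r - (SL.Choquet Y).toReal) (sub_pos.2 (EReal.coe_lt_coe_iff.1 hr))
  rw [sub_add_cancel] at this
  exact this.not_gt hr'

lemma E_min_sq_le (Y : Ω → ℝ) (hY : ∀ ω, 0 ≤ Y ω) (n : ℕ) :
    SL.E (fun ω => min (Y ω) n ^ 2) ≤
      ((∑ i ∈ Finset.range n, (2 * (i : ℝ) + 1) * SL.V {ω | (i : ℝ) ≤ Y ω} : ℝ) : EReal) :=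
  (SL.mono _ _ fun ω => min_sq_le_sum_indicator Y ω (hY ω) n).trans
    (SL.E_sum_indicator_le n _ (fun _ => by positivity) _)

lemma sum_V_nat_le (Y : Ω → ℝ) (hY : SL.Choquet Y ≠ ⊤) (n : ℕ) :
    ∑ i ∈ Finset.range n, SL.V {ω | (i : ℝ) ≤ Y ω} ≤ (SL.Choquet Y).toReal + 1 := by
  cases n with
  | zero => simpa using add_nonneg ENNReal.toReal_nonneg zero_le_one
  | succ n =>
    rw [Finset.sum_range_succ']
    have h := SL.sum_V_le_Choquet Y hY one_pos n
    simp only [one_mul] at h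
    exact add_le_add h (SL.V_le_one _)

lemma summable_E_min_sq (Y : Ω → ℝ) (hY0 : ∀ ω, 0 ≤ Y ω) (hY : SL.Choquet Y ≠ ⊤) :
    Summable fun j : ℕ => (SL.E fun ω => min (Y ω) (j : ℝ) ^ 2).toReal / (j : ℝ) ^ 2 := by
  have hE0 : ∀ j : ℕ, 0 ≤ SL.E fun ω => min (Y ω) (j : ℝ) ^ 2 := fun j => by
    have h := SL.mono (fun _ => 0) (fun ω => min (Y ω) (j : ℝ) ^ 2) (fun ω => sq_nonneg _)
    rwa [SL.const_eq] at h
  refine summable_of_sum_range_le (c := 4 * ((SL.Choquet Y).toReal + 1))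
    (fun j => div_nonneg (EReal.toReal_nonneg (hE0 j)) (sq_nonneg _)) fun n => ?_
  set v : ℕ → ℝ := fun i => SL.V {ω | (i : ℝ) ≤ Y ω}
  have hv0 : ∀ i, 0 ≤ v i := fun i => SL.V_nonneg _
  calc _ ≤ ∑ j ∈ Finset.range n, ∑ i ∈ Finset.range j,
        (2 * (i : ℝ) + 1) * v i * ((j : ℝ) ^ 2)⁻¹ := by
        refine Finset.sum_le_sum fun j _ => ?_
        rw [← Finset.sum_mul, div_eq_mul_inv]
        gcongr
        have h := EReal.toReal_le_toReal (SL.E_min_sq_le Y hY0 j)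
          (ne_bot_of_le_ne_bot EReal.zero_ne_bot (hE0 j)) (EReal.coe_ne_top _)
        rwa [EReal.toReal_coe] at h
    _ = ∑ i ∈ Finset.range n, ∑ j ∈ Finset.Ioo i n,
        (2 * (i : ℝ) + 1) * v i * ((j : ℝ) ^ 2)⁻¹ := by
        refine Finset.sum_comm' fun j i => ?_
        simp only [Finset.mem_range, Finset.mem_Ioo]
        lia
    _ ≤ ∑ i ∈ Finset.range n, 4 * v i := by
        refine Finset.sum_le_sum fun i _ => ?_
        rw [← Finset.mul_sum]
        have hi := hv0 i
        calc _ ≤ (2 * (i : ℝ) + 1) * v i * (2 / (i + 1)) := by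
              gcongr
              exact sum_Ioo_inv_sq_le i n
          _ ≤ 4 * v i := by
              rw [mul_div_assoc', div_le_iff₀ (by positivity)]
              nlinarith
    _ ≤ _ := by
        rw [← Finset.mul_sum]
        gcongr
        exact SL.sum_V_nat_le Y hY n

end SublinearExp

/-- Lemma 4.7: if `C_𝕍(|X|) < ∞` then (a) `Σ_j 𝔼[(|X| ∧ j)²]/j² < ∞`, and
(b) if moreover `𝔼[|X| ∧ c] → 𝔼[|X|]` as `c → ∞`, then `𝔼[|X|] ≤ C_𝕍(|X|)`. -/
theorem stmt15 {Ω : Type} (SL : SublinearExp Ω) (X : Ω → ℝ)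
    (hCh : SL.Choquet (fun ω => |X ω|) ≠ ⊤) :
    ((∀ j : ℕ, SL.E (fun ω => (min |X ω| (j : ℝ)) ^ 2) ≠ ⊤) ∧
      Summable (fun j : ℕ =>
        (SL.E fun ω => (min |X ω| (j : ℝ)) ^ 2).toReal / (j : ℝ) ^ 2)) ∧
    (Tendsto (fun c : ℝ => SL.E fun ω => min |X ω| c) atTop
        (nhds (SL.E fun ω => |X ω|)) →
      SL.E (fun ω => |X ω|) ≤ ((SL.Choquet fun ω => |X ω|) : EReal)) := by
  refine ⟨⟨fun j => ne_top_of_le_ne_top (EReal.coe_ne_top _)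
      (SL.E_min_sq_le (fun ω => |X ω|) (fun _ => abs_nonneg _) j),
    SL.summable_E_min_sq (fun ω => |X ω|) (fun _ => abs_nonneg _) hCh⟩, fun hlim => ?_⟩
  rw [← EReal.coe_ennreal_toReal hCh]
  exact le_of_tendsto hlim (Eventually.of_forall (SL.E_min_le_Choquet _ hCh))
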